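/- With p₁ < p₂ and a = p₁p₂, b = p₁(1−p₂), c = (1−p₁)p₂, the stationary probability of state −1 in the priority-to-U₁ Markov chain is π_{−1} = (c−b)/(a+c), and consequently the throughput of the secondary user is τ₂ = p₂(1 − π_{−1}) = p₂(1 − (c−b)/(a+c)) = p₁. -/

import Mathlib

/-!
Two flow balances determine the answer. With `0'` read as the state `-1`, the set
`{0', …, i', 0, …, i}` is left only by `i → i + 1`, with probability `b`, and entered only from
`(i + 1)'`, with probability `a + c`; summed over `i` this balance reads `b S = (a + c) S'`, where
`S` and `S'` are the masses of the states `i ≥ 0` and of the states `i'` with `i ≥ 1`. The cut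
between the unprimed states and all others reads `(a + b) (π₋₁ + S') = c S`. Together with
`π₋₁ + S + S' = 1` they give `(a + c) (1 - π₋₁) = (a + b + c) S = a + b`, and `a + b = p₁`,
`a + c = p₂` are the marginal success probabilities of the two channels.
-/

/-- The balance equations of the priority-to-U₁ chain. In each slot both channels succeed, only the
first does, only the second does, or neither does, with probabilities `a`, `b`, `c`, `d`. The masses
are `πm1` for the state `-1`, `π i` for the states `i ≥ 0` and `π' i` for the primed states `i ≥ 1`;
the value `π' 0` is meaningless. -/
structure IsPriorityBalanced {R : Type*} [Ring R] (a b c d πm1 : R) (π π' : ℕ → R) : Prop where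
  unprimed : ∀ i, 1 ≤ i → (1 - a - d) * π i = b * (π (i - 1) + π' i) + a * π' (i + 1)
  primed : ∀ i, 1 ≤ i → (1 - d) * π' i = c * (π i + π' (i + 1))
  neg_one : (1 - c - d) * πm1 = c * (π 0 + π' 1)
  zero : (1 - a - d) * π 0 = a * π' 1 + (a + b) * πm1

namespace IsPriorityBalanced

variable {R : Type*} [CommRing R] {a b c d πm1 : R} {π π' : ℕ → R}

theorem level_cut (h : IsPriorityBalanced a b c d πm1 π π') (habcd : a + b + c + d = 1) (i : ℕ) :
    b * π i = (a + c) * π' (i + 1) := by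
  obtain rfl : d = 1 - a - b - c := by linear_combination habcd
  induction i with
  | zero => linear_combination h.zero + h.neg_one
  | succ i ih =>
    have h_unprimed := h.unprimed (i + 1) i.succ_pos
    rw [Nat.add_sub_cancel] at h_unprimed
    linear_combination h_unprimed + h.primed (i + 1) i.succ_pos + ih

variable [TopologicalSpace R] [IsTopologicalRing R] [T2Space R]

theorem tsum_level_cut (h : IsPriorityBalanced a b c d πm1 π π') (habcd : a + b + c + d = 1)
    (hsum : Summable π) (hsum' : Summable fun i => π' (i + 1)) :
    b * ∑' i, π i = (a + c) * ∑' i, π' (i + 1) := by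
  rw [← hsum.tsum_mul_left, ← hsum'.tsum_mul_left]
  exact tsum_congr (h.level_cut habcd)

theorem tsum_primed (h : IsPriorityBalanced a b c d πm1 π π')
    (hsum : Summable π) (hsum' : Summable fun i => π' (i + 1)) :
    (1 - d) * ∑' i, π' (i + 1) = c * ((∑' i, π (i + 1)) + ∑' i, π' (i + 2)) := by
  have hsum_succ : Summable fun i => π (i + 1) := (summable_nat_add_iff 1).2 hsum
  have hsum'_succ : Summable fun i => π' (i + 2) :=
    (summable_nat_add_iff (f := fun i => π' (i + 1)) 1).2 hsum'
  rw [← hsum_succ.tsum_add hsum'_succ, ← hsum'.tsum_mul_left,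
    ← (hsum_succ.add hsum'_succ).tsum_mul_left]
  exact tsum_congr fun i => h.primed (i + 1) i.succ_pos

theorem unprimed_cut (h : IsPriorityBalanced a b c d πm1 π π') (habcd : a + b + c + d = 1)
    (hsum : Summable π) (hsum' : Summable fun i => π' (i + 1)) :
    (a + b) * (πm1 + ∑' i, π' (i + 1)) = c * ∑' i, π i := by
  have hS : ∑' i, π i = π 0 + ∑' i, π (i + 1) := hsum.tsum_eq_zero_add
  have hS' : ∑' i, π' (i + 1) = π' 1 + ∑' i, π' (i + 2) := hsum'.tsum_eq_zero_add
  linear_combination h.tsum_primed hsum hsum' + h.neg_one - c * hS - c * hS' +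
    (πm1 + ∑' i, π' (i + 1)) * habcd

theorem mul_one_sub_neg_one_mass (h : IsPriorityBalanced a b c d πm1 π π')
    (habcd : a + b + c + d = 1) (hsum : Summable π) (hsum' : Summable fun i => π' (i + 1))
    (hnorm : πm1 + (∑' i, π i) + (∑' i, π' (i + 1)) = 1) :
    (a + c) * (1 - πm1) = a + b := by
  have hS : (a + b + c) * ∑' i, π i = a + b := by
    linear_combination (a + b) * hnorm - h.unprimed_cut habcd hsum hsum'
  calc (a + c) * (1 - πm1)
      = (a + c) * (∑' i, π i) + (a + c) * ∑' i, π' (i + 1) := by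
        linear_combination -(a + c) * hnorm
    _ = (a + c) * (∑' i, π i) + b * ∑' i, π i := by rw [h.tsum_level_cut habcd hsum hsum']
    _ = a + b := by linear_combination hS

end IsPriorityBalanced

theorem stmt13_general {K : Type*} [Field K] [TopologicalSpace K] [IsTopologicalRing K] [T2Space K]
    {a b c d πm1 : K} {π π' : ℕ → K} (habcd : a + b + c + d = 1) (hac : a + c ≠ 0)
    (h : IsPriorityBalanced a b c d πm1 π π')
    (hsum : Summable π) (hsum' : Summable fun i => π' (i + 1))
    (hnorm : πm1 + (∑' i, π i) + (∑' i, π' (i + 1)) = 1) :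
    πm1 = (c - b) / (a + c) ∧ (a + c) * (1 - πm1) = a + b := by
  have h_throughput := h.mul_one_sub_neg_one_mass habcd hsum hsum' hnorm
  refine ⟨?_, h_throughput⟩
  rw [eq_div_iff hac]
  linear_combination -h_throughput

/-- With `p₁ < p₂`, the stationary probability of state `-1` of the priority-to-U₁
Markov chain is `π₋₁ = (c-b)/(a+c)`, and the throughput of the secondary user is
`τ₂ = p₂(1 - π₋₁) = p₁`. -/
theorem stmt13 (p₁ p₂ : ℝ) (hp₁ : 0 < p₁ ∧ p₁ < 1) (hp₂ : 0 < p₂ ∧ p₂ < 1)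
    (hlt : p₁ < p₂)
    (a b c d : ℝ) (ha : a = p₁ * p₂) (hb : b = p₁ * (1 - p₂))
    (hc : c = (1 - p₁) * p₂) (hd : d = (1 - p₁) * (1 - p₂))
    (πm1 : ℝ) (π π' : ℕ → ℝ)
    (hposm1 : 0 < πm1) (hpos : ∀ i, 0 < π i) (hpos' : ∀ i, 1 ≤ i → 0 < π' i)
    (heq1 : ∀ i, 1 ≤ i → (1 - a - d) * π i = b * (π (i - 1) + π' i) + a * π' (i + 1))
    (heq2 : ∀ i, 1 ≤ i → (1 - d) * π' i = c * (π i + π' (i + 1)))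
    (heq3 : (1 - c - d) * πm1 = c * (π 0 + π' 1))
    (heq4 : (1 - a - d) * π 0 = a * π' 1 + (a + b) * πm1)
    (hsum : Summable π) (hsum' : Summable fun i => π' (i + 1))
    (hnorm : πm1 + (∑' i, π i) + (∑' i, π' (i + 1)) = 1) :
    πm1 = (c - b) / (a + c) ∧ p₂ * (1 - πm1) = p₁ := by
  obtain rfl : p₁ = a + b := by rw [ha, hb]; ring
  obtain rfl : p₂ = a + c := by rw [ha, hc]; ring
  exact stmt13_general (by linear_combination ha + hb + hc + hd) hp₂.1.ne'
    ⟨heq1, heq2, heq3, heq4⟩ hsum hsum' hnorm
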